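/- The least fixed point defining infinitary rewriting is attained within ω₁ iterations: for the monotone map F(x) = νy.((→ε ∪ ↓x)* ∘ ↓y), define ordinal approximants by F_0 = ∅, F_{α+1} = F(F_α), and F_λ = ⋃_{β<λ} F_β for limit λ. Then F_{ω₁} = μF = →→→, where ω₁ is the first uncountable ordinal. -/

import Mathlib

open Relation

/-- The polynomial functor of a signature. -/
def Sig {F : Type} (ar : F → ℕ) (X : Type) : PFunctor.{0} :=
  ⟨X ⊕ F, fun a => match a with
    | Sum.inl _ => Empty
    | Sum.inr f => Fin (ar f)⟩

/-- Possibly infinite terms: the final coalgebra (M-type) of the signature functor. -/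
abbrev Tm {F : Type} (ar : F → ℕ) (X : Type) : Type := (Sig ar X).M

/-- The lifting `↓R` of a relation on terms. -/
def lift {F : Type} (ar : F → ℕ) (X : Type) (R : Tm ar X → Tm ar X → Prop) :
    Tm ar X → Tm ar X → Prop := fun s t =>
  s = t ∨ ∃ (f : F) (sa ta : Fin (ar f) → Tm ar X),
    s = PFunctor.M.mk ⟨Sum.inr f, sa⟩ ∧ t = PFunctor.M.mk ⟨Sum.inr f, ta⟩ ∧
    ∀ i, R (sa i) (ta i)

/-- Knaster–Tarski least fixed point. -/
def mu {L : Type*} [CompleteLattice L] (f : L → L) : L := sInf {x | f x ≤ x}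

/-- Knaster–Tarski greatest fixed point. -/
def nu {L : Type*} [CompleteLattice L] (f : L → L) : L := sSup {x | x ≤ f x}

/-- `F x = νy.((→ε ∪ ↓x)* ∘ ↓y)`. -/
def Fmap {F X : Type} (ar : F → ℕ) (root : Tm ar X → Tm ar X → Prop)
    (x : Tm ar X → Tm ar X → Prop) : Tm ar X → Tm ar X → Prop :=
  nu (fun y => Relation.Comp (ReflTransGen (root ⊔ lift ar X x)) (lift ar X y))

/-- The infinitary rewrite relation `→→→ := μx.νy.((→ε ∪ ↓x)* ∘ ↓y)`. -/
def ired {F X : Type} (ar : F → ℕ) (root : Tm ar X → Tm ar X → Prop) :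
    Tm ar X → Tm ar X → Prop :=
  mu (Fmap ar root)

/-- The ordinal approximants of the least fixed point of `F`:
`F_0 = ∅`, `F_{α+1} = F(F_α)`, and `F_λ = ⋃_{β<λ} F_β` for limit `λ`. -/
noncomputable def approx {F X : Type} (ar : F → ℕ)
    (root : Tm ar X → Tm ar X → Prop) (o : Ordinal.{0}) :
    Tm ar X → Tm ar X → Prop :=
  Ordinal.limitRecOn o ⊥ (fun _ ih => Fmap ar root ih)
    (fun o _ ih => ⨆ (b : {b : Ordinal.{0} // b < o}), ih b.1 b.2)

theorem lift_mono_aux {F : Type} (ar : F → ℕ) (X : Type) {R S : Tm ar X → Tm ar X → Prop}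
    (h : R ≤ S) : lift ar X R ≤ lift ar X S := by
  rintro s t (e | ⟨f, sa, ta, hs, ht, hi⟩)
  · exact Or.inl e
  · exact Or.inr ⟨f, sa, ta, hs, ht, fun i => h _ _ (hi i)⟩

theorem rtg_mono_aux {F X : Type} (ar : F → ℕ) (root : Tm ar X → Tm ar X → Prop)
    {x x' : Tm ar X → Tm ar X → Prop} (h : x ≤ x') {s u : Tm ar X}
    (hs : ReflTransGen (root ⊔ lift ar X x) s u) :
    ReflTransGen (root ⊔ lift ar X x') s u :=
  ReflTransGen.mono (fun a b hab => (sup_le_sup_left (lift_mono_aux ar X h) root) a b hab) _ _ hs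

theorem le_Fmap_aux {F X : Type} (ar : F → ℕ) (root : Tm ar X → Tm ar X → Prop)
    {x y : Tm ar X → Tm ar X → Prop}
    (h : y ≤ Relation.Comp (ReflTransGen (root ⊔ lift ar X x)) (lift ar X y)) :
    y ≤ Fmap ar root x := le_sSup h

theorem Fmap_unfold_aux {F X : Type} (ar : F → ℕ) (root : Tm ar X → Tm ar X → Prop)
    (x : Tm ar X → Tm ar X → Prop) :
    Fmap ar root x ≤
      Relation.Comp (ReflTransGen (root ⊔ lift ar X x)) (lift ar X (Fmap ar root x)) := by
  refine sSup_le ?_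
  intro y hy s t hst
  obtain ⟨u, hsu, hut⟩ := hy s t hst
  exact ⟨u, hsu, lift_mono_aux ar X (le_Fmap_aux ar root hy) _ _ hut⟩

theorem Fmap_mono_aux {F X : Type} (ar : F → ℕ) (root : Tm ar X → Tm ar X → Prop) :
    Monotone (Fmap ar root) := by
  intro x x' h
  apply le_Fmap_aux
  intro s t hst
  obtain ⟨u, hsu, hut⟩ := Fmap_unfold_aux ar root x s t hst
  exact ⟨u, rtg_mono_aux ar root h hsu, hut⟩

theorem Fmap_mu_le_aux {F X : Type} (ar : F → ℕ) (root : Tm ar X → Tm ar X → Prop) :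
    Fmap ar root (mu (Fmap ar root)) ≤ mu (Fmap ar root) := by
  refine le_sInf ?_
  intro x hx
  exact (Fmap_mono_aux ar root (sInf_le hx)).trans hx

section
variable {F X : Type} (ar : F → ℕ) (root : Tm ar X → Tm ar X → Prop)

theorem approx_zero_aux : approx ar root 0 = ⊥ := by
  simp [approx]

theorem approx_succ_aux (o : Ordinal.{0}) :
    approx ar root (o + 1) = Fmap ar root (approx ar root o) := by
  simp [approx]

theorem approx_limit_aux {o : Ordinal.{0}} (ho : Order.IsSuccLimit o) :
    approx ar root o = ⨆ (b : {b : Ordinal.{0} // b < o}), approx ar root b.1 := by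
  unfold approx
  rw [Ordinal.limitRecOn_limit _ _ _ _ ho]

theorem approx_le_limit_aux {o b : Ordinal.{0}} (ho : Order.IsSuccLimit o) (hb : b < o) :
    approx ar root b ≤ approx ar root o := by
  rw [approx_limit_aux ar root ho]
  exact le_iSup (fun b : {b : Ordinal.{0} // b < o} => approx ar root b.1) ⟨b, hb⟩

theorem approx_le_Fmap_aux (o : Ordinal.{0}) :
    approx ar root o ≤ Fmap ar root (approx ar root o) := by
  induction o using Ordinal.limitRecOn with
  | zero => rw [approx_zero_aux]; exact bot_le
  | add_one o ih =>
    rw [approx_succ_aux]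
    exact Fmap_mono_aux ar root ih
  | limit o ho ih =>
    conv_lhs => rw [approx_limit_aux ar root ho]
    refine iSup_le fun b => ?_
    exact (ih b.1 b.2).trans (Fmap_mono_aux ar root (approx_le_limit_aux ar root ho b.2))

theorem approx_mono_aux : Monotone (approx ar root) := by
  intro b o
  induction o using Ordinal.limitRecOn with
  | zero =>
    intro h
    have : b = 0 := le_antisymm h zero_le
    rw [this]
  | add_one o ih =>
    intro h
    rcases h.lt_or_eq with h | h
    · have h' : b ≤ o := Order.lt_add_one_iff.mp h
      rw [approx_succ_aux]
      exact (ih h').trans (approx_le_Fmap_aux ar root o)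
    · rw [h]
  | limit o ho ih =>
    intro h
    rcases h.lt_or_eq with h | h
    · exact approx_le_limit_aux ar root ho h
    · rw [h]

theorem approx_le_mu_aux (o : Ordinal.{0}) : approx ar root o ≤ mu (Fmap ar root) := by
  induction o using Ordinal.limitRecOn with
  | zero => rw [approx_zero_aux]; exact bot_le
  | add_one o ih =>
    rw [approx_succ_aux]
    exact (Fmap_mono_aux ar root ih).trans (Fmap_mu_le_aux ar root)
  | limit o ho ih =>
    rw [approx_limit_aux ar root ho]
    exact iSup_le fun b => ih b.1 b.2

theorem approx_omega_elim_aux {s t : Tm ar X} (h : approx ar root (Ordinal.omega 1) s t) :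
    ∃ b : Ordinal.{0}, b < Ordinal.omega 1 ∧ approx ar root b s t := by
  rw [approx_limit_aux ar root (Cardinal.isSuccLimit_omega 1)] at h
  simp only [iSup_apply, iSup_Prop_eq] at h
  obtain ⟨b, hb⟩ := h
  exact ⟨b.1, b.2, hb⟩

theorem bound_aux {ι : Type} [Countable ι] (f : ι → Ordinal.{0})
    (hf : ∀ i, f i < Ordinal.omega 1) : ∃ g < Ordinal.omega 1, ∀ i, f i ≤ g :=
  ⟨⨆ i, f i, Ordinal.iSup_lt_omega_one hf, fun i => Ordinal.le_iSup f i⟩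

theorem rtg_bound_aux {s u : Tm ar X}
    (h : ReflTransGen (root ⊔ lift ar X (approx ar root (Ordinal.omega 1))) s u) :
    ∃ b : Ordinal.{0}, b < Ordinal.omega 1 ∧
      ReflTransGen (root ⊔ lift ar X (approx ar root b)) s u := by
  induction h with
  | refl => exact ⟨0, (Cardinal.isSuccLimit_omega 1).bot_lt, ReflTransGen.refl⟩
  | @tail v w _ hvw ih =>
    obtain ⟨b, hb, hsv⟩ := ih
    rcases hvw with hr | e | ⟨f, sa, ta, hs, ht, hi⟩
    · exact ⟨b, hb, hsv.tail (Or.inl hr)⟩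
    · exact ⟨b, hb, e ▸ hsv⟩
    · choose c hc hc' using fun i => approx_omega_elim_aux ar root (hi i)
      obtain ⟨g, hg, hcg⟩ := bound_aux c hc
      refine ⟨max b g, max_lt hb hg, ?_⟩
      refine (rtg_mono_aux ar root (approx_mono_aux ar root (le_max_left b g)) hsv).tail ?_
      exact Or.inr (Or.inr ⟨f, sa, ta, hs, ht, fun i =>
        approx_mono_aux ar root ((hcg i).trans (le_max_right b g)) _ _ (hc' i)⟩)

theorem step_aux (p : Tm ar X × Tm ar X) : ∃ (b : Ordinal.{0}) (C : Set (Tm ar X × Tm ar X)),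
    b < Ordinal.omega 1 ∧ C.Countable ∧
    (Fmap ar root (approx ar root (Ordinal.omega 1)) p.1 p.2 →
      (∀ q ∈ C, Fmap ar root (approx ar root (Ordinal.omega 1)) q.1 q.2) ∧
      Relation.Comp (ReflTransGen (root ⊔ lift ar X (approx ar root b)))
        (lift ar X (fun s t => (s, t) ∈ C)) p.1 p.2) := by
  by_cases hp : Fmap ar root (approx ar root (Ordinal.omega 1)) p.1 p.2
  · obtain ⟨u, hsu, hut⟩ := Fmap_unfold_aux ar root _ _ _ hp
    obtain ⟨b, hb, hsu'⟩ := rtg_bound_aux ar root hsu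
    rcases hut with e | ⟨f, sa, ta, hs, ht, hi⟩
    · exact ⟨b, ∅, hb, Set.countable_empty, fun _ => ⟨by simp, u, hsu', Or.inl e⟩⟩
    · refine ⟨b, Set.range fun i => (sa i, ta i), hb, Set.countable_range _, fun _ => ⟨?_, u, hsu',
        Or.inr ⟨f, sa, ta, hs, ht, fun i => ⟨i, rfl⟩⟩⟩⟩
      rintro _ ⟨i, rfl⟩
      exact hi i
  · exact ⟨0, ∅, (Cardinal.isSuccLimit_omega 1).bot_lt, Set.countable_empty, fun h => absurd h hp⟩

theorem Fmap_approx_le_aux :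
    Fmap ar root (approx ar root (Ordinal.omega 1)) ≤ approx ar root (Ordinal.omega 1) := by
  intro s t hst
  choose b C hb hC hstep using step_aux ar root
  let R : ℕ → Set (Tm ar X × Tm ar X) := fun n =>
    Nat.rec {(s, t)} (fun _ S => ⋃ q ∈ S, C q) n
  have hR : ∀ n, (R n).Countable ∧
      ∀ q ∈ R n, Fmap ar root (approx ar root (Ordinal.omega 1)) q.1 q.2 := by
    intro n
    induction n with
    | zero =>
      refine ⟨Set.countable_singleton _, ?_⟩
      rintro q rfl
      exact hst
    | succ n ih =>
      refine ⟨ih.1.biUnion fun q _ => hC q, ?_⟩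
      intro q hq
      obtain ⟨q', hq', hqq⟩ := Set.mem_iUnion₂.mp hq
      exact (hstep q' (ih.2 q' hq')).1 q hqq
  have hU : (⋃ n, R n).Countable := Set.countable_iUnion fun n => (hR n).1
  have : Countable ↥(⋃ n, R n) := hU.to_subtype
  obtain ⟨g, hg, hbg⟩ := bound_aux (fun q : ↥(⋃ n, R n) => b q.1) fun q => hb q.1
  have key : (fun s t => (s, t) ∈ ⋃ n, R n) ≤ Fmap ar root (approx ar root g) := by
    apply le_Fmap_aux
    intro s' t' hmem
    obtain ⟨n, hn⟩ := Set.mem_iUnion.mp hmem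
    obtain ⟨u, hsu, hut⟩ := (hstep _ ((hR n).2 _ hn)).2
    refine ⟨u, rtg_mono_aux ar root (approx_mono_aux ar root (hbg ⟨_, hmem⟩)) hsu, ?_⟩
    refine lift_mono_aux ar X ?_ _ _ hut
    intro a c hac
    exact Set.mem_iUnion.mpr ⟨n + 1, Set.mem_iUnion₂.mpr ⟨_, hn, hac⟩⟩
  have h1 := key s t (Set.mem_iUnion.mpr ⟨0, rfl⟩)
  rw [← approx_succ_aux] at h1
  exact approx_mono_aux ar root (Order.add_one_le_of_lt hg) _ _ h1

end

/-- The least fixed point defining infinitary rewriting is attained within `ω₁`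
iterations: `F_{ω₁} = μF = →→→`, where `ω₁` is the first uncountable ordinal. -/
theorem approx_omega1_eq_ired {F X : Type} (ar : F → ℕ)
    (root : Tm ar X → Tm ar X → Prop) :
    approx ar root (Ordinal.omega 1) = mu (Fmap ar root) ∧
    mu (Fmap ar root) = ired ar root :=
  ⟨le_antisymm (approx_le_mu_aux ar root _) (sInf_le (Fmap_approx_le_aux ar root)), rfl⟩
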